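/- Let u₀ ∈ Ż_{5,4} with ∫_ℝ x u₀(x) dx ≠ 0, and let W(t)u₀ denote the solution of the linear IVP ∂ₜu + 𝓗∂ₓ²u = 0, u(x,0) = u₀(x), given on the Fourier side by (W(t)u₀)^(ξ) = e^{−it|ξ|ξ} û₀(ξ). Then for every t ≠ 0, W(t)u₀ ∈ L²(|x|^{7−ε} dx) for every ε ∈ (0,7], but W(t)u₀ ∉ L²(|x|⁷ dx). -/

import Mathlib

open MeasureTheory Real Complex Filter
open scoped FourierTransform ENNReal

noncomputable section

/-- The Hilbert transform on ℝ, defined via the Fourier transform: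
`(𝓗 f)^(ξ) = -i sgn(ξ) f̂(ξ)`. -/
def hilbertT (f : ℝ → ℂ) : ℝ → ℂ :=
  𝓕⁻ (fun ξ : ℝ => (-Complex.I) * (Real.sign ξ : ℂ) * 𝓕 f ξ)

/-- A real-valued solution of the Benjamin–Ono equation
`∂ₜ u + 𝓗 ∂ₓ² u + u ∂ₓ u = 0`, where `u t x` is the value at time `t`, position `x`. -/
def IsBOSolution (u : ℝ → ℝ → ℝ) : Prop :=
  ∀ t x : ℝ,
    (deriv (fun τ => u τ x) t : ℂ)
      + hilbertT (fun y => (iteratedDeriv 2 (fun z => u t z) y : ℂ)) x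
      + (u t x : ℂ) * (deriv (fun y => u t y) x : ℂ) = 0

/-- The (extended-real) `H^s(ℝ)` Sobolev norm of a function. -/
def hsNorm (s : ℝ) (f : ℝ → ℂ) : ℝ≥0∞ :=
  eLpNorm (fun ξ : ℝ => ((1 + ξ ^ 2) ^ (s / 2) : ℝ) * 𝓕 f ξ) 2 volume

/-- The (extended-real) norm of `f` in `L²(|x|^{2r} dx)`. -/
def wNorm (r : ℝ) (f : ℝ → ℂ) : ℝ≥0∞ :=
  eLpNorm (fun x : ℝ => (|x| ^ r : ℝ) * f x) 2 volume

/-- The norm of the weighted Sobolev space `Z_{s,r} = H^s(ℝ) ∩ L²(|x|^{2r} dx)`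
(it also controls the `L²` norm). -/
def zNorm (s r : ℝ) (f : ℝ → ℂ) : ℝ≥0∞ :=
  hsNorm s f + wNorm r f + eLpNorm f 2 volume

/-- Membership in `Z_{s,r} = H^s(ℝ) ∩ L²(|x|^{2r} dx)` for a real-valued function. -/
def InZ (s r : ℝ) (f : ℝ → ℝ) : Prop :=
  AEStronglyMeasurable f volume ∧ zNorm s r (fun x => (f x : ℂ)) < ⊤

/-- Membership in `Ż_{s,r} = {f ∈ Z_{s,r} : f̂(0) = 0}` for a real-valued function. -/
def InZdot (s r : ℝ) (f : ℝ → ℝ) : Prop :=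
  InZ s r f ∧ 𝓕 (fun x => (f x : ℂ)) 0 = 0

/-- `u ∈ C(ℝ : Z_{s,r})`: membership for all times plus continuity in the `Z_{s,r}` norm. -/
def ContZ (s r : ℝ) (u : ℝ → ℝ → ℝ) : Prop :=
  (∀ t, InZ s r (u t)) ∧
    ∀ t₀ : ℝ, Tendsto (fun t => zNorm s r (fun x => ((u t x : ℂ) - (u t₀ x : ℂ)))) (nhds t₀)
      (nhds 0)

/-- `u ∈ C(ℝ : Ż_{s,r})`. -/
def ContZdot (s r : ℝ) (u : ℝ → ℝ → ℝ) : Prop :=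
  ContZ s r u ∧ ∀ t, 𝓕 (fun x => (u t x : ℂ)) 0 = 0

end

/-- The solution `W(t)u₀` of the linear Benjamin–Ono equation
`∂ₜu + 𝓗∂ₓ²u = 0`, given on the Fourier side by `(W(t)u₀)^(ξ) = e^{-it|ξ|ξ} û₀(ξ)`. -/
noncomputable def linBO (t : ℝ) (u₀ : ℝ → ℝ) : ℝ → ℂ :=
  𝓕⁻ (fun ξ : ℝ => Complex.exp (-Complex.I * t * |ξ| * ξ) * 𝓕 (fun x => (u₀ x : ℂ)) ξ)

/-!
The decay of `W(t)u₀` is the smoothness of its Fourier transform `e^{-it|ξ|ξ} û₀(ξ)`, which is four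
times differentiable except at `ξ = 0`. Since `û₀(0) = 0`, its derivatives up to order two are
continuous, while the third one jumps at the origin by a multiple of `t û₀'(0)`, that is, of
`t ∫ x u₀`. Up to a square integrable remainder, four derivatives therefore leave a Dirac mass
proportional to `t ∫ x u₀`, so `x⁴ W(t)u₀(x)` is a constant plus a square integrable function. Hence
`|x|^p |W(t)u₀|²` is comparable to `|x|^{p-8}` at infinity as soon as the constant is nonzero.
-/

/-! ### Locally absolutely continuous functions -/

section Primitive

open Set intervalIntegral
open scoped Topology ComplexConjugate

theorem intervalIntegrable_of_locallyIntegrable {E : Type*} [NormedAddCommGroup E]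
    {f : ℝ → E} (hf : LocallyIntegrable f) (a b : ℝ) :
    IntervalIntegrable f volume a b :=
  (hf.integrableOn_isCompact isCompact_uIcc).intervalIntegrable

variable {E : Type*} [NormedAddCommGroup E] [NormedSpace ℝ E]

/-- `f` is a primitive of the locally integrable function `f'`; equivalently, `f` is locally
absolutely continuous with derivative `f'` almost everywhere. The derivative is carried as data
because it is only determined up to a null set. -/
structure IsPrimitive (f f' : ℝ → E) : Prop where
  locallyIntegrable : LocallyIntegrable f'
  integral_eq_sub : ∀ a b : ℝ, ∫ x in a..b, f' x = f b - f a

theorem absolutelyContinuousOnInterval_primitive {f : ℝ → E} (hf : LocallyIntegrable f)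
    (a b : ℝ) : AbsolutelyContinuousOnInterval (fun x => ∫ y in a..x, f y) a b := by
  have hf_int := intervalIntegrable_of_locallyIntegrable hf
  refine squeeze_zero (fun I => Finset.sum_nonneg fun _ _ => dist_nonneg)
    (fun I => Finset.sum_le_sum fun i _ => ?_)
    ((hf_int a b).norm.absolutelyContinuousOnInterval_intervalIntegral left_mem_uIcc)
  simp only [dist_eq_norm]
  rw [integral_interval_sub_left (hf_int _ _) (hf_int _ _),
    integral_interval_sub_left (hf_int _ _).norm (hf_int _ _).norm]
  exact norm_integral_le_abs_integral_norm

theorem measurable_signCast {𝕜 : Type*} [RCLike 𝕜] :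
    Measurable fun x : ℝ => (SignType.sign x : 𝕜) := by
  have hite : (fun x : ℝ => (SignType.sign x : 𝕜)) =
      fun x => if 0 < x then 1 else if x < 0 then -1 else 0 := by
    funext x
    rw [sign_apply]
    split_ifs <;> simp
  rw [hite]
  exact .ite measurableSet_Ioi measurable_const (.ite measurableSet_Iio measurable_const
    measurable_const)

theorem norm_signCast_le_one {𝕜 : Type*} [RCLike 𝕜] (σ : SignType) : ‖(σ : 𝕜)‖ ≤ 1 := by
  cases σ <;> simp

theorem integrable_sign_mul {𝕜 : Type*} [RCLike 𝕜] {f : ℝ → 𝕜} (hf : Integrable f) :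
    Integrable fun x => (SignType.sign x : 𝕜) * f x :=
  hf.bdd_mul (c := 1) measurable_signCast.aestronglyMeasurable
    (ae_of_all _ fun _ => norm_signCast_le_one _)

namespace IsPrimitive

variable {f f' g g' : ℝ → E}

theorem intervalIntegrable (hf : IsPrimitive f f') (a b : ℝ) : IntervalIntegrable f' volume a b :=
  intervalIntegrable_of_locallyIntegrable hf.locallyIntegrable a b

theorem eq_integral_add (hf : IsPrimitive f f') (a : ℝ) :
    f = fun x => (∫ y in a..x, f' y) + f a := by
  funext x
  rw [hf.integral_eq_sub, sub_add_cancel]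

theorem of_hasDerivAt [CompleteSpace E] (hf : ∀ x, HasDerivAt f (f' x) x) (hf' : Continuous f') :
    IsPrimitive f f' where
  locallyIntegrable := hf'.locallyIntegrable
  integral_eq_sub a b :=
    integral_eq_sub_of_hasDerivAt (fun x _ => hf x) (hf'.intervalIntegrable a b)

theorem continuous (hf : IsPrimitive f f') : Continuous f := by
  rw [hf.eq_integral_add 0]
  exact (continuous_primitive hf.intervalIntegrable 0).add continuous_const

theorem absolutelyContinuousOnInterval (hf : IsPrimitive f f') (a b : ℝ) :
    AbsolutelyContinuousOnInterval f a b := by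
  rw [hf.eq_integral_add a]
  refine (absolutelyContinuousOnInterval_primitive hf.locallyIntegrable a b).add ?_
  exact (LipschitzWith.const (f a)).lipschitzOnWith.absolutelyContinuousOnInterval

theorem ae_hasDerivAt [CompleteSpace E] (hf : IsPrimitive f f') : ∀ᵐ x, HasDerivAt f (f' x) x := by
  filter_upwards [LocallyIntegrable.ae_hasDerivAt_integral hf.locallyIntegrable] with x hx
  rw [hf.eq_integral_add 0]
  exact (hx 0).add_const (f 0)

theorem hasDerivAt [CompleteSpace E] (hf : IsPrimitive f f') (hf' : Continuous f') (x : ℝ) :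
    HasDerivAt f (f' x) x := by
  rw [hf.eq_integral_add 0]
  exact (hf'.integral_hasStrictDerivAt 0 x).hasDerivAt.add_const (f 0)

theorem of_absolutelyContinuousOnInterval [CompleteSpace E] (hf' : LocallyIntegrable f')
    (hf : ∀ a b, AbsolutelyContinuousOnInterval f a b) (hderiv : ∀ᵐ x, HasDerivAt f (f' x) x) :
    IsPrimitive f f' where
  locallyIntegrable := hf'
  integral_eq_sub a b := by
    have hac := (hf a b).sub (absolutelyContinuousOnInterval_primitive hf' a b)
    obtain ⟨C, hC⟩ := hac.const_of_ae_hasDerivAt_zero <| by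
      filter_upwards [hderiv, LocallyIntegrable.ae_hasDerivAt_integral hf'] with x hx hx' _
      simpa only [sub_self] using hx.sub (hx' a)
    have hab := (hC b right_mem_uIcc).trans (hC a left_mem_uIcc).symm
    simp only [Pi.sub_apply, integral_same, sub_zero] at hab
    rw [← hab, sub_sub_cancel]

theorem add (hf : IsPrimitive f f') (hg : IsPrimitive g g') :
    IsPrimitive (fun x => f x + g x) (fun x => f' x + g' x) where
  locallyIntegrable := hf.locallyIntegrable.add hg.locallyIntegrable
  integral_eq_sub a b := by
    rw [integral_add (hf.intervalIntegrable a b) (hg.intervalIntegrable a b), hf.integral_eq_sub,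
      hg.integral_eq_sub, sub_add_sub_comm]

theorem neg (hf : IsPrimitive f f') : IsPrimitive (fun x => -f x) (fun x => -f' x) where
  locallyIntegrable := hf.locallyIntegrable.neg
  integral_eq_sub a b := by
    rw [intervalIntegral.integral_neg, hf.integral_eq_sub, neg_sub, neg_sub_neg]

theorem sub (hf : IsPrimitive f f') (hg : IsPrimitive g g') :
    IsPrimitive (fun x => f x - g x) (fun x => f' x - g' x) := by
  simpa only [sub_eq_add_neg] using hf.add hg.neg

theorem congr_deriv {f'' : ℝ → E} (hf : IsPrimitive f f') (h : ∀ x, f' x = f'' x) :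
    IsPrimitive f f'' :=
  funext h ▸ hf

theorem integral_Ioi_eq (hf : IsPrimitive f f') (hf_int : Integrable f)
    (hf'_int : Integrable f') (a : ℝ) : ∫ x in Ioi a, f' x = -f a := by
  have hlim : Tendsto f atTop (𝓝 ((∫ x in Ioi a, f' x) + f a)) := by
    nth_rw 1 [hf.eq_integral_add a]
    exact (intervalIntegral_tendsto_integral_Ioi a hf'_int.integrableOn tendsto_id).add_const (f a)
  refine eq_neg_of_add_eq_zero_left (IntegrableAtFilter.eq_zero_of_tendsto
    (hf_int.integrableAtFilter atTop) (fun s hs => ?_) hlim)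
  obtain ⟨b, hb⟩ := mem_atTop_sets.1 hs
  exact measure_mono_top hb volume_Ici

theorem integral_Iic_eq (hf : IsPrimitive f f') (hf_int : Integrable f)
    (hf'_int : Integrable f') (a : ℝ) : ∫ x in Iic a, f' x = f a := by
  have hlim : Tendsto f atBot (𝓝 (f a - ∫ x in Iic a, f' x)) := by
    have hf_eq : f = fun x => f a - ∫ y in x..a, f' y := by
      funext x
      rw [hf.integral_eq_sub, sub_sub_cancel]
    nth_rw 1 [hf_eq]
    exact (intervalIntegral_tendsto_integral_Iic a hf'_int.integrableOn tendsto_id).const_sub (f a)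
  refine (sub_eq_zero.1 (IntegrableAtFilter.eq_zero_of_tendsto
    (hf_int.integrableAtFilter atBot) (fun s hs => ?_) hlim)).symm
  obtain ⟨b, hb⟩ := mem_atBot_sets.1 hs
  exact measure_mono_top hb volume_Iic

theorem integral_eq_zero (hf : IsPrimitive f f') (hf_int : Integrable f)
    (hf'_int : Integrable f') : ∫ x, f' x = 0 := by
  rw [← integral_Iic_add_Ioi (b := 0) hf'_int.integrableOn hf'_int.integrableOn,
    hf.integral_Iic_eq hf_int hf'_int, hf.integral_Ioi_eq hf_int hf'_int, add_neg_cancel]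

section RCLike

variable {𝕜 : Type*} [RCLike 𝕜] {f f' g g' : ℝ → 𝕜}

theorem const_mul (hf : IsPrimitive f f') (c : 𝕜) :
    IsPrimitive (fun x => c * f x) (fun x => c * f' x) where
  locallyIntegrable := hf.locallyIntegrable.smul c
  integral_eq_sub a b := by rw [intervalIntegral.integral_const_mul, hf.integral_eq_sub, mul_sub]

theorem mul (hf : IsPrimitive f f') (hg : IsPrimitive g g') :
    IsPrimitive (fun x => f x * g x) (fun x => f' x * g x + f x * g' x) := by
  refine of_absolutelyContinuousOnInterval ?_
    (fun a b => (hf.absolutelyContinuousOnInterval a b).smul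
      (hg.absolutelyContinuousOnInterval a b)) ?_
  · simp only [← locallyIntegrableOn_univ]
    exact ((hf.locallyIntegrable.locallyIntegrableOn univ).mul_continuousOn
        hg.continuous.continuousOn isClosed_univ.isLocallyClosed).add
      ((hg.locallyIntegrable.locallyIntegrableOn univ).continuousOn_mul
        hf.continuous.continuousOn isClosed_univ.isLocallyClosed)
  · filter_upwards [hf.ae_hasDerivAt, hg.ae_hasDerivAt] with x hfx hgx
    exact hfx.mul hgx

theorem conjugate (hf : IsPrimitive f f') :
    IsPrimitive (fun x => conj (f x)) (fun x => conj (f' x)) := by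
  refine of_absolutelyContinuousOnInterval ?_ (fun a b => ?_) ?_
  · exact hf.locallyIntegrable.mono
      (RCLike.continuous_conj.comp_aestronglyMeasurable hf.locallyIntegrable.aestronglyMeasurable)
      (ae_of_all _ fun x => (RCLike.norm_conj _).le)
  · simpa only [AbsolutelyContinuousOnInterval, ← RCLike.star_def, dist_star_star] using
      hf.absolutelyContinuousOnInterval a b
  · exact hf.ae_hasDerivAt.mono fun x hx => hx.star

theorem sign_mul (hf : IsPrimitive f f') (hf₀ : f 0 = 0) :
    IsPrimitive (fun x => (SignType.sign x : 𝕜) * f x) (fun x => (SignType.sign x : 𝕜) * f' x) := by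
  have hloc : LocallyIntegrable fun x => (SignType.sign x : 𝕜) * f' x := by
    refine hf.locallyIntegrable.mono
      (measurable_signCast.aestronglyMeasurable.mul hf.locallyIntegrable.aestronglyMeasurable)
      (ae_of_all _ fun x => ?_)
    rw [norm_mul]
    exact mul_le_of_le_one_left (norm_nonneg _) (norm_signCast_le_one _)
  have hfrom_zero (x : ℝ) : ∫ y in 0..x, (SignType.sign y : 𝕜) * f' y = SignType.sign x * f x := by
    have hsign : ∀ᵐ y, y ∈ uIoc 0 x → (SignType.sign y : 𝕜) * f' y = SignType.sign x * f' y := by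
      filter_upwards [compl_mem_ae_iff.2 (measure_singleton 0)] with y hy₀ hy
      rcases mem_uIoc.1 hy with h | h
      · rw [sign_pos h.1, sign_pos (h.1.trans_le h.2)]
      · rw [sign_neg (h.2.lt_of_ne hy₀), sign_neg (h.1.trans_le h.2)]
    rw [integral_congr_ae hsign, intervalIntegral.integral_const_mul, hf.integral_eq_sub, hf₀,
      sub_zero]
  refine ⟨hloc, fun a b => ?_⟩
  have hint := intervalIntegrable_of_locallyIntegrable hloc
  rw [← integral_interval_sub_left (hint 0 b) (hint 0 a), hfrom_zero, hfrom_zero]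

theorem integral_sign_mul (hf : IsPrimitive f f') (hf_int : Integrable f)
    (hf'_int : Integrable f') : ∫ x, (SignType.sign x : 𝕜) * f' x = -2 * f 0 := by
  have hint := integrable_sign_mul hf'_int
  have hIoi : ∫ x in Ioi 0, (SignType.sign x : 𝕜) * f' x = ∫ x in Ioi 0, f' x :=
    setIntegral_congr_fun measurableSet_Ioi fun x hx => by simp [sign_pos (mem_Ioi.1 hx)]
  have hIic : ∫ x in Iic 0, (SignType.sign x : 𝕜) * f' x = ∫ x in Iic 0, -f' x := by
    simp only [integral_Iic_eq_integral_Iio]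
    exact setIntegral_congr_fun measurableSet_Iio fun x hx => by simp [sign_neg (mem_Iio.1 hx)]
  rw [← integral_Iic_add_Ioi (b := 0) hint.integrableOn hint.integrableOn, hIoi, hIic,
    MeasureTheory.integral_neg, hf.integral_Iic_eq hf_int hf'_int,
    hf.integral_Ioi_eq hf_int hf'_int]
  ring

theorem integral_mul_eq_neg (hf : IsPrimitive f f') (hg : IsPrimitive g g')
    (hfg : Integrable fun x => f x * g x) (hf'g : Integrable fun x => f' x * g x)
    (hfg' : Integrable fun x => f x * g' x) : ∫ x, f' x * g x = -∫ x, f x * g' x := by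
  have hzero := (hf.mul hg).integral_eq_zero hfg (hf'g.add hfg')
  rw [MeasureTheory.integral_add hf'g hfg'] at hzero
  exact eq_neg_of_add_eq_zero_left hzero

end RCLike

end IsPrimitive

end Primitive

/-! ### The Fourier transform of integrable and square integrable functions -/

section Fourier

open Set
open scoped SchwartzMap ComplexInnerProductSpace

theorem integral_fourier_mul_eq {f g : ℝ → ℂ} (hf : Integrable f) (hg : Integrable g) :
    ∫ x, 𝓕 f x * g x = ∫ x, f x * 𝓕 g x := by
  simpa using! VectorFourier.integral_bilin_fourierIntegral_eq_flip (ContinuousLinearMap.mul ℂ ℂ)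
    (L := innerₗ ℝ) continuous_fourierChar continuous_inner hf hg

theorem continuous_fourier {f : ℝ → ℂ} (hf : Integrable f) : Continuous (𝓕 f) :=
  VectorFourier.fourierIntegral_continuous continuous_fourierChar (innerSL ℝ).continuous₂ hf

theorem fourier_ae_eq_fourier_toLp {f : ℝ → ℂ} (hf₁ : Integrable f) (hf₂ : MemLp f 2) :
    𝓕 f =ᵐ[volume] (𝓕 (hf₂.toLp f) : Lp ℂ 2 (volume : Measure ℝ)) := by
  refine ae_eq_of_integral_contDiff_smul_eq (continuous_fourier hf₁).locallyIntegrable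
    ((Lp.memLp _).locallyIntegrable one_le_two) fun g hg hgc => ?_
  let φ : 𝓢(ℝ, ℂ) := HasCompactSupport.toSchwartzMap (f := fun x => (g x : ℂ))
    (hgc.comp_left (g := fun x : ℝ => (x : ℂ)) Complex.ofReal_zero)
    (Complex.ofRealCLM.contDiff.comp hg)
  have hpair := congrArg (fun T : 𝓢'(ℝ, ℂ) => T φ)
    (Lp.fourier_toTemperedDistribution_eq (hf₂.toLp f))
  simp only [TemperedDistribution.fourier_apply, Lp.toTemperedDistribution_apply,
    smul_eq_mul] at hpair
  calc ∫ x, g x • 𝓕 f x = ∫ x, 𝓕 f x * φ x := by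
        simp only [Complex.real_smul, mul_comm]; rfl
    _ = ∫ x, f x * 𝓕 (φ : ℝ → ℂ) x := integral_fourier_mul_eq hf₁ φ.integrable
    _ = ∫ x, 𝓕 φ x * (hf₂.toLp f : Lp ℂ 2 (volume : Measure ℝ)) x := by
        refine integral_congr_ae (hf₂.coeFn_toLp.mono fun x hx => ?_)
        simp only [hx, mul_comm, SchwartzMap.fourier_coe]
    _ = ∫ x, g x • (𝓕 (hf₂.toLp f) : Lp ℂ 2 (volume : Measure ℝ)) x := by
        rw [hpair]; simp only [Complex.real_smul]; rfl

theorem memLp_fourier {f : ℝ → ℂ} (hf₁ : Integrable f) (hf₂ : MemLp f 2) : MemLp (𝓕 f) 2 :=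
  (memLp_congr_ae (fourier_ae_eq_fourier_toLp hf₁ hf₂)).2 (Lp.memLp _)

theorem continuous_integral_mul_memLp {ψ : ℝ → ℂ} (hψ : MemLp ψ 2) :
    Continuous fun h : Lp ℂ 2 (volume : Measure ℝ) => ∫ x, h x * ψ x := by
  have hinner : (fun h : Lp ℂ 2 (volume : Measure ℝ) => ∫ x, h x * ψ x) =
      fun h => inner ℂ (hψ.star.toLp _) h := by
    funext h
    rw [L2.inner_def]
    refine integral_congr_ae (hψ.star.coeFn_toLp.mono fun x hx => ?_)
    simp [hx]
  rw [hinner]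
  fun_prop

theorem integral_fourier_toLp_mul_eq {f φ : ℝ → ℂ} (hf : MemLp f 2) (hφ₁ : Integrable φ)
    (hφ₂ : MemLp φ 2) :
    ∫ x, (𝓕 (hf.toLp f) : Lp ℂ 2 (volume : Measure ℝ)) x * φ x = ∫ x, f x * 𝓕 φ x := by
  have hLp (h : Lp ℂ 2 (volume : Measure ℝ)) :
      ∫ x, (𝓕 h : Lp ℂ 2 (volume : Measure ℝ)) x * φ x = ∫ x, h x * 𝓕 φ x := by
    refine (SchwartzMap.denseRange_toLpCLM (p := 2) ENNReal.ofNat_ne_top).induction_on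
      (p := fun h => ∫ x, (𝓕 h : Lp ℂ 2 (volume : Measure ℝ)) x * φ x = ∫ x, h x * 𝓕 φ x) h ?_ ?_
    · exact isClosed_eq
        ((continuous_integral_mul_memLp hφ₂).comp (Lp.fourierTransformₗᵢ ℝ ℂ).continuous)
        (continuous_integral_mul_memLp (memLp_fourier hφ₁ hφ₂))
    · intro χ
      rw [SchwartzMap.toLpCLM_apply, SchwartzMap.toLp_fourier_eq]
      refine Eq.trans ?_ ((integral_fourier_mul_eq χ.integrable hφ₁).trans ?_)
      · exact integral_congr_ae ((SchwartzMap.coeFn_toLp (𝓕 χ) 2 _).mono fun x hx => by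
          simp only [hx, SchwartzMap.fourier_coe])
      · exact integral_congr_ae ((SchwartzMap.coeFn_toLp χ 2 _).mono fun x hx => by simp only [hx])
  rw [hLp]
  exact integral_congr_ae (hf.coeFn_toLp.mono fun x hx => by simp only [hx])

section Derivative

variable {f f' : ℝ → ℂ}

theorem integrable_fourierKernel_mul (hf : Integrable f) (y : ℝ) :
    Integrable fun x : ℝ => cexp (↑(-2 * π * x * y) * I) * f x :=
  hf.bdd_mul (c := 1) (Continuous.aestronglyMeasurable (by fun_prop))
    (ae_of_all _ fun x => (norm_exp_ofReal_mul_I _).le)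

theorem fourier_eq_integral_mul (f : ℝ → ℂ) (y : ℝ) :
    𝓕 f y = ∫ x : ℝ, cexp (↑(-2 * π * x * y) * I) * f x := by
  simp only [fourier_real_eq_integral_exp_smul, smul_eq_mul]

theorem isPrimitive_fourierKernel (y : ℝ) :
    IsPrimitive (fun x : ℝ => cexp (↑(-2 * π * x * y) * I))
      (fun x : ℝ => -(2 * π * I * y) * cexp (↑(-2 * π * x * y) * I)) := by
  refine .of_hasDerivAt (fun x => ?_) (by fun_prop)
  have := ((((hasDerivAt_id x).const_mul (-2 * π)).mul_const y).ofReal_comp.mul_const I).cexp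
  refine this.congr_deriv ?_
  push_cast [id]
  ring

namespace IsPrimitive

theorem fourierKernel_mul (hf : IsPrimitive f f') (y : ℝ) :
    IsPrimitive (fun x : ℝ => cexp (↑(-2 * π * x * y) * I) * f x)
      (fun x : ℝ => -(2 * π * I * y) * (cexp (↑(-2 * π * x * y) * I) * f x) +
        cexp (↑(-2 * π * x * y) * I) * f' x) := by
  simpa only [mul_assoc] using (isPrimitive_fourierKernel y).mul hf

theorem fourier_eq (hf : IsPrimitive f f') (hf_int : Integrable f) (hf'_int : Integrable f')
    (y : ℝ) : 𝓕 f' y = 2 * π * I * y * 𝓕 f y := by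
  have hker := integrable_fourierKernel_mul hf_int y
  have hker' := integrable_fourierKernel_mul hf'_int y
  have hzero := (hf.fourierKernel_mul y).integral_eq_zero hker ((hker.const_mul _).add hker')
  rw [integral_add (hker.const_mul _) hker', integral_const_mul, ← fourier_eq_integral_mul,
    ← fourier_eq_integral_mul] at hzero
  linear_combination hzero

theorem fourier_sign_mul_eq (hf : IsPrimitive f f') (hf_int : Integrable f)
    (hf'_int : Integrable f') (y : ℝ) :
    𝓕 (fun x => (SignType.sign x : ℂ) * f' x) y =
      2 * π * I * y * 𝓕 (fun x => (SignType.sign x : ℂ) * f x) y - 2 * f 0 := by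
  have hker := integrable_fourierKernel_mul (integrable_sign_mul hf_int) y
  have hker' := integrable_fourierKernel_mul (integrable_sign_mul hf'_int) y
  have hjump := (hf.fourierKernel_mul y).integral_sign_mul (integrable_fourierKernel_mul hf_int y)
    (((integrable_fourierKernel_mul hf_int y).const_mul _).add
      (integrable_fourierKernel_mul hf'_int y))
  simp only [mul_add, mul_left_comm (SignType.cast _ : ℂ)] at hjump
  rw [integral_add (hker.const_mul _) hker', integral_const_mul, ← fourier_eq_integral_mul,
    ← fourier_eq_integral_mul] at hjump
  simp only [mul_zero, zero_mul, ofReal_zero, Complex.exp_zero, one_mul] at hjump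
  linear_combination hjump

theorem fourier_of_integrable (hf : Integrable f)
    (hf' : Integrable fun x : ℝ => -(2 * π * I * x) * f x) :
    IsPrimitive (𝓕 f) (𝓕 fun x : ℝ => -(2 * π * I * x) * f x) := by
  have hxf : Integrable fun x : ℝ => x • f x := by
    refine (hf'.const_mul (-(2 * π * I))⁻¹).congr (ae_of_all _ fun x => ?_)
    simp only [Complex.real_smul]
    field_simp
  refine .of_hasDerivAt (fun y => ?_) (continuous_fourier hf')
  refine (hasDerivAt_fourier hf hxf y).congr_deriv ?_
  simp only [smul_eq_mul, neg_mul]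

end IsPrimitive

theorem integral_fourier_toLp_eq_sub (hf : Integrable f)
    (hf' : MemLp (fun x : ℝ => -(2 * π * I * x) * f x) 2) {a b : ℝ} (hab : a ≤ b) :
    ∫ y in a..b, (𝓕 (hf'.toLp _) : Lp ℂ 2 (volume : Measure ℝ)) y = 𝓕 f b - 𝓕 f a := by
  set χ : ℝ → ℂ := (Ioc a b).indicator fun _ => 1 with hχ
  have hχ₁ : Integrable χ := (integrable_indicator_iff measurableSet_Ioc).2
    (integrableOn_const measure_Ioc_lt_top.ne)
  have hχ₂ : MemLp χ 2 := memLp_indicator_const 2 measurableSet_Ioc 1 (.inr (by simp))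
  have hfourier (x : ℝ) : -(2 * π * I * x) * 𝓕 χ x =
      cexp (↑(-2 * π * x * b) * I) - cexp (↑(-2 * π * x * a) * I) := by
    have hker := (isPrimitive_fourierKernel x).integral_eq_sub a b
    simp only [mul_right_comm (-2 * π) _ x] at hker
    rw [← hker, intervalIntegral.integral_const_mul, intervalIntegral.integral_of_le hab,
      ← integral_indicator measurableSet_Ioc, fourier_eq_integral_mul]
    congr 2 with y
    by_cases hy : y ∈ Ioc a b <;> simp [hχ, hy, mul_right_comm]
  calc ∫ y in a..b, (𝓕 (hf'.toLp _) : Lp ℂ 2 (volume : Measure ℝ)) y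
      = ∫ y, (𝓕 (hf'.toLp _) : Lp ℂ 2 (volume : Measure ℝ)) y * χ y := by
        rw [intervalIntegral.integral_of_le hab, ← integral_indicator measurableSet_Ioc]
        congr with y
        by_cases hy : y ∈ Ioc a b <;> simp [hχ, hy]
    _ = ∫ x : ℝ, -(2 * π * I * x) * f x * 𝓕 χ x := integral_fourier_toLp_mul_eq hf' hχ₁ hχ₂
    _ = ∫ x : ℝ, (cexp (↑(-2 * π * x * b) * I) * f x - cexp (↑(-2 * π * x * a) * I) * f x) := by
        simp only [← sub_mul, ← hfourier, mul_right_comm _ (f _)]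
    _ = 𝓕 f b - 𝓕 f a := by
        rw [integral_sub (integrable_fourierKernel_mul hf b) (integrable_fourierKernel_mul hf a),
          fourier_eq_integral_mul, fourier_eq_integral_mul]

theorem exists_memLp_isPrimitive_fourier (hf : Integrable f)
    (hf' : MemLp (fun x : ℝ => -(2 * π * I * x) * f x) 2) :
    ∃ G, MemLp G 2 ∧ IsPrimitive (𝓕 f) G := by
  refine ⟨_, Lp.memLp (𝓕 (hf'.toLp _)), (Lp.memLp _).locallyIntegrable one_le_two, fun a b => ?_⟩
  rcases le_total a b with hab | hba
  · exact integral_fourier_toLp_eq_sub hf hf' hab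
  · rw [intervalIntegral.integral_symm, integral_fourier_toLp_eq_sub hf hf' hba, neg_sub]

theorem IsPrimitive.memLp_mul_fourier (hf : IsPrimitive f f') (hf₁ : Integrable f) (hf₂ : MemLp f 2)
    (hf' : MemLp f' 2) : MemLp (fun y : ℝ => 2 * π * I * y * 𝓕 f y) 2 := by
  refine (memLp_congr_ae ?_).2 (Lp.memLp (𝓕 (hf'.toLp f')))
  refine ae_eq_of_integral_contDiff_smul_eq
    (Continuous.mul (by fun_prop) (continuous_fourier hf₁)).locallyIntegrable
    ((Lp.memLp _).locallyIntegrable one_le_two) fun g hg hgc => ?_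
  have hφ_cont : Continuous fun x => (g x : ℂ) := Complex.continuous_ofReal.comp hg.continuous
  have hφ_supp : HasCompactSupport fun x => (g x : ℂ) :=
    hgc.comp_left (g := fun x : ℝ => (x : ℂ)) Complex.ofReal_zero
  set φ : ℝ → ℂ := fun x => (g x : ℂ) with hφ
  set ψ : ℝ → ℂ := fun x => -(2 * π * I * x) * φ x with hψ
  have hψ_cont : Continuous ψ := by fun_prop
  have hψ_supp : HasCompactSupport ψ := hφ_supp.mul_left
  have hφ₁ := hφ_cont.integrable_of_hasCompactSupport (μ := volume) hφ_supp
  have hφ₂ := hφ_cont.memLp_of_hasCompactSupport (μ := volume) (p := 2) hφ_supp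
  have hψ₁ := hψ_cont.integrable_of_hasCompactSupport (μ := volume) hψ_supp
  have hψ₂ := hψ_cont.memLp_of_hasCompactSupport (μ := volume) (p := 2) hψ_supp
  have hderiv : IsPrimitive (𝓕 φ) (𝓕 ψ) := .fourier_of_integrable hφ₁ hψ₁
  have hparts : ∫ x, f' x * 𝓕 φ x = -∫ x, f x * 𝓕 ψ x :=
    hf.integral_mul_eq_neg hderiv (hf₂.integrable_mul (memLp_fourier hφ₁ hφ₂))
      (hf'.integrable_mul (memLp_fourier hφ₁ hφ₂)) (hf₂.integrable_mul (memLp_fourier hψ₁ hψ₂))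
  calc ∫ x, g x • (2 * π * I * x * 𝓕 f x) = -∫ x, 𝓕 f x * ψ x := by
        rw [← integral_neg]; congr with x; simp only [hψ, hφ, Complex.real_smul]; ring
    _ = -∫ x, f x * 𝓕 ψ x := by rw [integral_fourier_mul_eq hf₁ hψ₁]
    _ = ∫ x, f' x * 𝓕 φ x := hparts.symm
    _ = ∫ x, (𝓕 (hf'.toLp f') : Lp ℂ 2 (volume : Measure ℝ)) x * φ x :=
        (integral_fourier_toLp_mul_eq hf' hφ₁ hφ₂).symm
    _ = ∫ x, g x • (𝓕 (hf'.toLp f') : Lp ℂ 2 (volume : Measure ℝ)) x := by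
        simp only [hφ, Complex.real_smul, mul_comm]

end Derivative

end Fourier

/-! ### Weighted interpolation -/

section Interpolation

open Set
open scoped ComplexConjugate

theorem frequently_mul_lt_of_integrableOn_Ioi {q : ℝ → ℝ} {a : ℝ} (hq : IntegrableOn q (Ioi a))
    {ε : ℝ} (hε : 0 < ε) : ∃ᶠ R in atTop, R * q R < ε := by
  intro hlarge
  obtain ⟨b, hb⟩ := eventually_atTop.1
    ((hlarge.and (eventually_gt_atTop 0)).and (eventually_gt_atTop a))
  refine not_integrableOn_Ioi_inv (a := b) (Integrable.mono'
    ((hq.mono_set (Ioi_subset_Ioi (hb b le_rfl).2.le)).const_mul ε⁻¹)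
    measurable_inv.aestronglyMeasurable ?_)
  filter_upwards [ae_restrict_mem measurableSet_Ioi] with R hR
  obtain ⟨⟨hRq, hR₀⟩, -⟩ := hb R (mem_Ioi.1 hR).le
  rw [Real.norm_of_nonneg (inv_nonneg.2 hR₀.le), inv_mul_eq_div, le_div_iff₀ hε,
    inv_mul_le_iff₀ hR₀]
  exact not_lt.1 hRq

theorem IsPrimitive.integrable_of_norm_sub_le {Φ Φ' : ℝ → ℂ} {N q B : ℝ → ℝ}
    (hΦ : IsPrimitive Φ Φ') (hN : LocallyIntegrable N) (hN₀ : ∀ x, 0 ≤ N x)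
    (hq : Integrable q) (hΦq : ∀ x, ‖Φ x‖ ≤ |x| * q x)
    (hB : Integrable B) (hNB : ∀ x, ‖(N x : ℂ) - Φ' x‖ ≤ B x) : Integrable N := by
  have hq_symm : Integrable fun x => q x + q (-x) := hq.add hq.comp_neg
  set S : Set ℝ := {R | R * (q R + q (-R)) < 1} with hS
  have hne : NeBot (atTop ⊓ 𝓟 S) := frequently_iff_neBot.1
    (frequently_mul_lt_of_integrableOn_Ioi (a := 0) hq_symm.integrableOn one_pos)
  refine integrable_of_intervalIntegral_norm_bounded ((∫ x, B x) + 1)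
    (l := atTop ⊓ 𝓟 S) (a := fun R => -R) (b := id)
    (fun R => (hN.integrableOn_isCompact isCompact_Icc).mono_set Ioc_subset_Icc_self)
    (tendsto_neg_atTop_atBot.mono_left inf_le_left) (tendsto_id.mono_left inf_le_left) ?_
  filter_upwards [mem_inf_of_left (eventually_ge_atTop (0 : ℝ)),
    mem_inf_of_right (mem_principal_self S)] with R hR hRS
  have hRR : -R ≤ R := by linarith
  have hN_int : IntervalIntegrable (fun x => (N x : ℂ)) volume (-R) R :=
    let h := intervalIntegrable_of_locallyIntegrable hN (-R) R
    ⟨h.1.ofReal, h.2.ofReal⟩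
  have hboundary : ‖Φ R - Φ (-R)‖ ≤ 1 := by
    have h₁ := hΦq R
    have h₂ := hΦq (-R)
    rw [abs_neg] at h₂
    rw [abs_of_nonneg hR] at h₁ h₂
    rw [hS, mem_ofPred_eq, mul_add] at hRS
    linarith [norm_sub_le (Φ R) (Φ (-R))]
  have hinterior : ‖∫ x in -R..R, ((N x : ℂ) - Φ' x)‖ ≤ ∫ x, B x := by
    refine (intervalIntegral.norm_integral_le_of_norm_le hRR (ae_of_all _ fun x _ => hNB x)
      hB.intervalIntegrable).trans ?_
    rw [intervalIntegral.integral_of_le hRR]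
    exact setIntegral_le_integral hB (ae_of_all _ fun x => (norm_nonneg _).trans (hNB x))
  calc ∫ x in -R..R, ‖N x‖ = ‖∫ x in -R..R, (N x : ℂ)‖ := by
        simp only [Real.norm_of_nonneg (hN₀ _)]
        rw [intervalIntegral.integral_ofReal, Complex.norm_of_nonneg
          (intervalIntegral.integral_nonneg hRR fun x _ => hN₀ x)]
    _ = ‖(∫ x in -R..R, ((N x : ℂ) - Φ' x)) + (Φ R - Φ (-R))‖ := by
        rw [intervalIntegral.integral_sub hN_int (hΦ.intervalIntegrable _ _),
          hΦ.integral_eq_sub, sub_add_cancel]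
    _ ≤ (∫ x, B x) + 1 := (norm_add_le _ _).trans (add_le_add hinterior hboundary)

theorem IsPrimitive.memLp_two_of_norm_sub_le {Φ Φ' f : ℝ → ℂ} {q B : ℝ → ℝ}
    (hΦ : IsPrimitive Φ Φ') (hf : Continuous f) (hq : Integrable q) (hΦq : ∀ x, ‖Φ x‖ ≤ |x| * q x)
    (hB : Integrable B) (hfB : ∀ x, ‖f x * conj (f x) - Φ' x‖ ≤ B x) : MemLp f 2 := by
  refine (memLp_two_iff_integrable_sq_norm hf.aestronglyMeasurable).2
    (hΦ.integrable_of_norm_sub_le (hf.norm.pow 2).locallyIntegrable (fun x => sq_nonneg _) hq hΦq hB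
      fun x => ?_)
  rw [Complex.ofReal_pow, ← Complex.mul_conj']
  exact hfB x

theorem isPrimitive_ofReal_pow_succ (n : ℕ) :
    IsPrimitive (fun x : ℝ => (x : ℂ) ^ (n + 1)) (fun x : ℝ => (n + 1 : ℂ) * (x : ℂ) ^ n) := by
  refine .of_hasDerivAt (fun x => ?_) (by fun_prop)
  simpa using (hasDerivAt_pow (n + 1) (x : ℂ)).comp_ofReal

theorem memLp_pow_mul_of_le {f : ℝ → ℂ} {m k : ℕ} (hf : MemLp f 2)
    (hmf : MemLp (fun x : ℝ => (x : ℂ) ^ m * f x) 2) (hk : k ≤ m) :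
    MemLp (fun x : ℝ => (x : ℂ) ^ k * f x) 2 := by
  refine (hmf.norm.add hf.norm).mono (AEStronglyMeasurable.mul (by fun_prop) hf.1)
    (ae_of_all _ fun x => ?_)
  simp only [Pi.add_apply, norm_mul, norm_pow]
  rw [Real.norm_of_nonneg (by positivity), ← add_one_mul]
  gcongr
  rcases le_total 1 ‖(x : ℂ)‖ with hx | hx
  · exact (pow_le_pow_right₀ hx hk).trans (le_add_of_nonneg_right zero_le_one)
  · exact (pow_le_one₀ (norm_nonneg _) hx).trans (le_add_of_nonneg_left (by positivity))

theorem integrable_abs_pow_mul_norm_mul_norm {f g : ℝ → ℂ} {j k n : ℕ} (hn : j + k = n)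
    (hf : MemLp (fun x : ℝ => (x : ℂ) ^ j * f x) 2)
    (hg : MemLp (fun x : ℝ => (x : ℂ) ^ k * g x) 2) :
    Integrable fun x => |x| ^ n * (‖f x‖ * ‖g x‖) := by
  refine (hf.norm.integrable_mul hg.norm).congr (ae_of_all _ fun x => ?_)
  simp only [Pi.mul_apply, norm_mul, norm_pow, Complex.norm_real, Real.norm_eq_abs]
  rw [← hn, pow_add]
  ring

section Derivatives

variable {g g₁ g₂ g₃ g₄ : ℝ → ℂ}

theorem IsPrimitive.memLp_pow_succ_mul (m : ℕ) (hg : IsPrimitive g g₁) (hg₁ : IsPrimitive g₁ g₂)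
    (h₁₀ : Integrable fun x => |x| ^ (2 * m + 1) * (‖g₁ x‖ * ‖g x‖))
    (h₂₀ : Integrable fun x => |x| ^ (2 * m + 2) * (‖g₂ x‖ * ‖g x‖)) :
    MemLp (fun x : ℝ => (x : ℂ) ^ (m + 1) * g₁ x) 2 := by
  refine ((isPrimitive_ofReal_pow_succ (2 * m + 1)).mul
      (hg₁.mul hg.conjugate)).memLp_two_of_norm_sub_le
    (Continuous.mul (by fun_prop) hg₁.continuous) h₁₀ (fun x => le_of_eq ?_)
    ((h₁₀.const_mul (2 * m + 2)).add h₂₀) (fun x => ?_)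
  · simp only [norm_mul, norm_pow, RCLike.norm_conj, Complex.norm_real, Real.norm_eq_abs]
    ring
  · have hdiff : (x : ℂ) ^ (m + 1) * g₁ x * conj ((x : ℂ) ^ (m + 1) * g₁ x) -
        (((2 * m + 1 : ℕ) + 1 : ℂ) * (x : ℂ) ^ (2 * m + 1) * (g₁ x * conj (g x)) +
          (x : ℂ) ^ (2 * m + 1 + 1) * (g₂ x * conj (g x) + g₁ x * conj (g₁ x))) =
        -(((2 * m + 2 : ℕ) : ℂ) * ((x : ℂ) ^ (2 * m + 1) * (g₁ x * conj (g x))) +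
          (x : ℂ) ^ (2 * m + 2) * (g₂ x * conj (g x))) := by
      simp only [map_mul, map_pow, Complex.conj_ofReal]
      push_cast
      ring
    rw [hdiff, norm_neg]
    refine (norm_add_le _ _).trans_eq ?_
    simp only [norm_mul, norm_pow, RCLike.norm_conj, Complex.norm_real, Real.norm_eq_abs,
      Complex.norm_natCast, Pi.add_apply]
    push_cast
    ring

theorem memLp_sq_mul_of_isPrimitive (hg : IsPrimitive g g₁) (hg₁ : IsPrimitive g₁ g₂)
    (hg₂ : IsPrimitive g₂ g₃) (hg₃ : IsPrimitive g₃ g₄)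
    (h₂₁ : Integrable fun x => |x| ^ 3 * (‖g₂ x‖ * ‖g₁ x‖))
    (h₂₀ : Integrable fun x => |x| ^ 2 * (‖g₂ x‖ * ‖g x‖))
    (h₃₀ : Integrable fun x => |x| ^ 3 * (‖g₃ x‖ * ‖g x‖))
    (h₄₀ : Integrable fun x => |x| ^ 4 * (‖g₄ x‖ * ‖g x‖)) :
    MemLp (fun x : ℝ => (x : ℂ) ^ 2 * g₂ x) 2 := by
  have hΦ := ((isPrimitive_ofReal_pow_succ 3).mul
    ((hg₂.mul hg₁.conjugate).sub (hg₃.mul hg.conjugate))).sub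
    (((isPrimitive_ofReal_pow_succ 2).mul (hg₂.mul hg.conjugate)).const_mul 4)
  refine hΦ.memLp_two_of_norm_sub_le (Continuous.mul (by fun_prop) hg₂.continuous)
    ((h₂₁.add h₃₀).add (h₂₀.const_mul 4)) (fun x => ?_)
    ((h₄₀.add (h₃₀.const_mul 8)).add (h₂₀.const_mul 12)) (fun x => ?_)
  · have hsub := norm_sub_le (g₂ x * conj (g₁ x)) (g₃ x * conj (g x))
    refine (norm_sub_le _ _).trans ?_
    simp only [norm_mul, norm_pow, RCLike.norm_conj, Complex.norm_real, Real.norm_eq_abs,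
      Pi.add_apply, Complex.norm_ofNat] at hsub ⊢
    linear_combination |x| ^ 4 * hsub
  · have hdiff : (x : ℂ) ^ 2 * g₂ x * conj ((x : ℂ) ^ 2 * g₂ x) -
        (((3 : ℕ) + 1 : ℂ) * (x : ℂ) ^ 3 * (g₂ x * conj (g₁ x) - g₃ x * conj (g x)) +
          (x : ℂ) ^ (3 + 1) * (g₃ x * conj (g₁ x) + g₂ x * conj (g₂ x) -
            (g₄ x * conj (g x) + g₃ x * conj (g₁ x))) -
          4 * (((2 : ℕ) + 1 : ℂ) * (x : ℂ) ^ 2 * (g₂ x * conj (g x)) +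
            (x : ℂ) ^ (2 + 1) * (g₃ x * conj (g x) + g₂ x * conj (g₁ x)))) =
        (x : ℂ) ^ 4 * (g₄ x * conj (g x)) + 8 * ((x : ℂ) ^ 3 * (g₃ x * conj (g x))) +
          12 * ((x : ℂ) ^ 2 * (g₂ x * conj (g x))) := by
      simp only [map_mul, map_pow, Complex.conj_ofReal]
      push_cast
      ring
    rw [hdiff]
    refine (norm_add₃_le).trans_eq ?_
    simp only [norm_mul, norm_pow, RCLike.norm_conj, Complex.norm_real, Real.norm_eq_abs,
      Complex.norm_ofNat, Pi.add_apply]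

end Derivatives

/-- `G 0, …, G n` are the successive derivatives of a function in `H^n(ℝ) ∩ L²(|x|^{2n} dx)`. -/
structure IsWeightedSobolevJet (n : ℕ) (G : ℕ → ℝ → ℂ) : Prop where
  isPrimitive : ∀ k < n, IsPrimitive (G k) (G (k + 1))
  memLp : ∀ k ≤ n, MemLp (G k) 2
  memLp_pow_mul_zero : MemLp (fun x : ℝ => (x : ℂ) ^ n * G 0 x) 2

theorem IsWeightedSobolevJet.memLp_pow_mul {G : ℕ → ℝ → ℂ} (hG : IsWeightedSobolevJet 4 G)
    {j k : ℕ} (hjk : j + k ≤ 4) : MemLp (fun x : ℝ => (x : ℂ) ^ j * G k x) 2 := by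
  have hxG := hG.memLp_pow_mul_zero
  have hdown {k m : ℕ} (hm : MemLp (fun x : ℝ => (x : ℂ) ^ m * G k x) 2) (hk : k ≤ 4 := by omega)
      {j : ℕ} (hj : j ≤ m := by omega) : MemLp (fun x : ℝ => (x : ℂ) ^ j * G k x) 2 :=
    memLp_pow_mul_of_le (hG.memLp k hk) hm hj
  have hzero (k : ℕ) (hk : k ≤ 4 := by omega) : MemLp (fun x : ℝ => (x : ℂ) ^ 0 * G k x) 2 := by
    simpa only [pow_zero, one_mul] using hG.memLp k hk
  have hG₀ := hG.isPrimitive 0 (by omega)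
  have hG₁ := hG.isPrimitive 1 (by omega)
  have hG₂ := hG.isPrimitive 2 (by omega)
  have hG₃ := hG.isPrimitive 3 (by omega)
  have hx2G1 : MemLp (fun x : ℝ => (x : ℂ) ^ 2 * G 1 x) 2 :=
    hG₀.memLp_pow_succ_mul 1 hG₁
      (integrable_abs_pow_mul_norm_mul_norm (j := 0) (k := 3) rfl (hzero 1) (hdown hxG))
      (integrable_abs_pow_mul_norm_mul_norm (j := 0) rfl (hzero 2) hxG)
  have hxG2 : MemLp (fun x : ℝ => (x : ℂ) ^ 1 * G 2 x) 2 :=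
    hG₁.memLp_pow_succ_mul 0 hG₂
      (integrable_abs_pow_mul_norm_mul_norm (j := 0) (k := 1) rfl (hzero 2) (hdown hx2G1))
      (integrable_abs_pow_mul_norm_mul_norm (j := 0) rfl (hzero 3) hx2G1)
  have hx2G2 : MemLp (fun x : ℝ => (x : ℂ) ^ 2 * G 2 x) 2 :=
    memLp_sq_mul_of_isPrimitive hG₀ hG₁ hG₂ hG₃
      (integrable_abs_pow_mul_norm_mul_norm rfl hxG2 hx2G1)
      (integrable_abs_pow_mul_norm_mul_norm (j := 0) (k := 2) rfl (hzero 2) (hdown hxG))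
      (integrable_abs_pow_mul_norm_mul_norm (j := 0) (k := 3) rfl (hzero 3) (hdown hxG))
      (integrable_abs_pow_mul_norm_mul_norm (j := 0) rfl (hzero 4) hxG)
  have hx3G1 : MemLp (fun x : ℝ => (x : ℂ) ^ 3 * G 1 x) 2 :=
    hG₀.memLp_pow_succ_mul 2 hG₁
      (integrable_abs_pow_mul_norm_mul_norm (j := 1) rfl (hdown hx2G1) hxG)
      (integrable_abs_pow_mul_norm_mul_norm (j := 2) (k := 4) rfl hx2G2 hxG)
  have hxG3 : MemLp (fun x : ℝ => (x : ℂ) ^ 1 * G 3 x) 2 :=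
    hG₂.memLp_pow_succ_mul 0 hG₃
      (integrable_abs_pow_mul_norm_mul_norm (j := 0) rfl (hzero 3) hxG2)
      (integrable_abs_pow_mul_norm_mul_norm (j := 0) rfl (hzero 4) hx2G2)
  have hk : k ≤ 4 := by omega
  interval_cases k
  exacts [hdown hxG, hdown hx3G1, hdown hx2G2, hdown hxG3, hdown (hzero 4)]

end Interpolation

/-! ### Jumps of the derivative and decay of the Fourier transform -/

section Jump

theorem memLp_sign_mul {f : ℝ → ℂ} (hf : MemLp f 2) :
    MemLp (fun x => (SignType.sign x : ℂ) * f x) 2 :=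
  hf.mono (measurable_signCast.aestronglyMeasurable.mul hf.1) (ae_of_all _ fun x => by
    rw [norm_mul]
    exact mul_le_of_le_one_left (norm_nonneg _) (norm_signCast_le_one _))

theorem fourier_fun_add {f g : ℝ → ℂ} (hf : Integrable f) (hg : Integrable g) (y : ℝ) :
    𝓕 (fun x => f x + g x) y = 𝓕 f y + 𝓕 g y :=
  congrFun (VectorFourier.fourierIntegral_add continuous_fourierChar
    (innerSL ℝ).continuous₂ hf hg) y

theorem fourier_const_mul (c : ℂ) (f : ℝ → ℂ) (y : ℝ) : 𝓕 (fun x => c * f x) y = c * 𝓕 f y :=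
  congrFun (VectorFourier.fourierIntegral_const_smul 𝐞 volume (innerₗ ℝ) f c) y

theorem fourier_fun_sub {f g : ℝ → ℂ} (hf : Integrable f) (hg : Integrable g) (y : ℝ) :
    𝓕 (fun x => f x - g x) y = 𝓕 f y - 𝓕 g y := by
  have hadd := fourier_fun_add hf (hg.const_mul (-1)) y
  rw [fourier_const_mul] at hadd
  simpa only [neg_one_mul, ← sub_eq_add_neg] using hadd

theorem exists_isPrimitive_eq_one : ∃ χ χ' : ℝ → ℂ, IsPrimitive χ χ' ∧ χ 0 = 1 ∧
    Integrable χ ∧ MemLp χ 2 ∧ Integrable χ' ∧ MemLp χ' 2 := by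
  let bump : ContDiffBump (0 : ℝ) := default
  set χ : ℝ → ℂ := fun x => (bump x : ℂ) with hχ
  have hχ_zero : χ 0 = 1 := by
    simp only [hχ, bump.eventuallyEq_one.eq_of_nhds, Pi.one_apply, Complex.ofReal_one]
  have hχ_contDiff : ContDiff ℝ 1 χ := Complex.ofRealCLM.contDiff.comp bump.contDiff
  have hχ_supp : HasCompactSupport χ :=
    bump.hasCompactSupport.comp_left (g := fun x : ℝ => (x : ℂ)) Complex.ofReal_zero
  have hχ'_cont : Continuous (deriv χ) := hχ_contDiff.continuous_deriv le_rfl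
  have hχ' : IsPrimitive χ (deriv χ) :=
    .of_hasDerivAt (fun x => (hχ_contDiff.differentiable one_ne_zero x).hasDerivAt) hχ'_cont
  exact ⟨χ, deriv χ, hχ', hχ_zero,
    hχ'.continuous.integrable_of_hasCompactSupport hχ_supp,
    hχ'.continuous.memLp_of_hasCompactSupport hχ_supp,
    hχ'_cont.integrable_of_hasCompactSupport hχ_supp.deriv,
    hχ'_cont.memLp_of_hasCompactSupport hχ_supp.deriv⟩

namespace IsPrimitive

variable {f f' : ℝ → ℂ}

theorem memLp_mul_fourier_sign_mul_sub (hf : IsPrimitive f f') (hf₁ : Integrable f)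
    (hf₂ : MemLp f 2) (hf' : MemLp f' 2) :
    MemLp (fun y : ℝ => 2 * π * I * y * 𝓕 (fun x => (SignType.sign x : ℂ) * f x) y -
      2 * f 0) 2 := by
  obtain ⟨χ, χ', hχ, hχ_zero, hχ₁, hχ₂, hχ'₁, hχ'₂⟩ := exists_isPrimitive_eq_one
  -- `f - f 0 * χ` vanishes at `0`, so multiplying it by the sign creates no jump there.
  have hcont : IsPrimitive (fun x => (SignType.sign x : ℂ) * (f x - f 0 * χ x))
      (fun x => (SignType.sign x : ℂ) * (f' x - f 0 * χ' x)) :=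
    (hf.sub (hχ.const_mul (f 0))).sign_mul (by rw [hχ_zero, mul_one, sub_self])
  have hcont₁ : Integrable fun x => (SignType.sign x : ℂ) * (f x - f 0 * χ x) :=
    integrable_sign_mul (hf₁.sub (hχ₁.const_mul (f 0)))
  have hcont_memLp := hcont.memLp_mul_fourier hcont₁
    (memLp_sign_mul (hf₂.sub (hχ₂.const_mul _))) (memLp_sign_mul (hf'.sub (hχ'₂.const_mul _)))
  have hjump_memLp :=
    (memLp_fourier (integrable_sign_mul hχ'₁) (memLp_sign_mul hχ'₂)).const_mul (f 0)
  refine (memLp_congr_ae (ae_of_all _ fun y => ?_)).1 (hcont_memLp.add hjump_memLp)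
  have hsplit : 𝓕 (fun x => (SignType.sign x : ℂ) * f x) y =
      𝓕 (fun x => (SignType.sign x : ℂ) * (f x - f 0 * χ x)) y +
        f 0 * 𝓕 (fun x => (SignType.sign x : ℂ) * χ x) y := by
    rw [← fourier_const_mul, ← fourier_fun_add hcont₁ ((integrable_sign_mul hχ₁).const_mul _)]
    refine congrArg (fun g : ℝ → ℂ => 𝓕 g y) (funext fun x => ?_)
    ring
  simp only [Pi.add_apply]
  rw [hsplit, hχ.fourier_sign_mul_eq hχ₁ hχ'₁, hχ_zero]
  ring

theorem memLp_pow_four_mul_fourier_add {F F₁ F₂ A A' B B' : ℝ → ℂ} (hF : IsPrimitive F F₁)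
    (hF₁ : IsPrimitive F₁ F₂) (hF₂ : IsPrimitive F₂ fun x => A x - (SignType.sign x : ℂ) * B x)
    (hA : IsPrimitive A A') (hB : IsPrimitive B B') (hF_int : Integrable F)
    (hF₁_int : Integrable F₁) (hF₂_int : Integrable F₂) (hA_int : Integrable A)
    (hB_int : Integrable B) (hA₂ : MemLp A 2) (hB₂ : MemLp B 2) (hA' : MemLp A' 2)
    (hB' : MemLp B' 2) : MemLp (fun y : ℝ => (2 * π * I * y) ^ 4 * 𝓕 F y + 2 * B 0) 2 := by
  refine (memLp_congr_ae (ae_of_all _ fun y => ?_)).1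
    ((hA.memLp_mul_fourier hA_int hA₂ hA').sub
      (hB.memLp_mul_fourier_sign_mul_sub hB_int hB₂ hB'))
  have hB_sign := integrable_sign_mul hB_int
  have hthird := hF₂.fourier_eq hF₂_int (hA_int.sub hB_sign) y
  rw [hF₁.fourier_eq hF₁_int hF₂_int, hF.fourier_eq hF_int hF₁_int,
    fourier_fun_sub hA_int hB_sign] at hthird
  simp only [Pi.sub_apply]
  linear_combination (2 * π * I * y) * hthird

end IsPrimitive

end Jump

/-! ### The Benjamin–Ono multiplier -/

section Phase

theorem signCast_mul_signCast_mul_self (x : ℝ) :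
    (SignType.sign x : ℂ) * ((SignType.sign x : ℂ) * x) = x := by
  rcases lt_trichotomy x 0 with hx | rfl | hx
  · simp [sign_neg hx]
  · simp
  · simp [sign_pos hx]

/-- The Fourier multiplier `e^{-it|ξ|ξ}` of the linear Benjamin–Ono group. -/
noncomputable def boPhase (t x : ℝ) : ℂ := cexp (-I * t * |x| * x)

theorem norm_boPhase (t x : ℝ) : ‖boPhase t x‖ = 1 := by
  rw [boPhase, Complex.norm_exp]
  simp

theorem boPhase_zero (t : ℝ) : boPhase t 0 = 1 := by simp [boPhase]

theorem continuous_boPhase (t : ℝ) : Continuous (boPhase t) := by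
  unfold boPhase
  fun_prop

theorem hasDerivAt_abs_mul_self (x : ℝ) : HasDerivAt (fun x : ℝ => |x| * x) (2 * |x|) x := by
  have hsq : IsPrimitive (fun x : ℝ => x ^ 2) (fun x => 2 * x) :=
    .of_hasDerivAt (fun x => by simpa using hasDerivAt_pow 2 x) (by fun_prop)
  have habs := hsq.sign_mul (zero_pow two_ne_zero)
  simp only [sq, ← mul_assoc, mul_right_comm _ (2 : ℝ), sign_mul_self] at habs
  simpa only [mul_comm] using habs.hasDerivAt (by fun_prop) x

theorem isPrimitive_boPhase (t : ℝ) :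
    IsPrimitive (boPhase t) fun x => -(2 * I * t) * (SignType.sign x * x) * boPhase t x := by
  have habs (x : ℝ) : (SignType.sign x : ℂ) * x = |x| := by
    rw [← sign_mul_self x]
    rcases lt_trichotomy x 0 with hx | rfl | hx <;> simp [*]
  simp only [habs]
  have hcont := continuous_boPhase t
  refine .of_hasDerivAt (fun x => ?_) (by fun_prop)
  have hexp := ((hasDerivAt_abs_mul_self x).ofReal_comp.const_mul (-I * t)).cexp
  simp only [Complex.ofReal_mul, ← mul_assoc] at hexp
  exact hexp.congr_deriv (by rw [boPhase]; push_cast; ring)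

theorem integrable_boPhase_mul {f : ℝ → ℂ} (hf : Integrable f) (t : ℝ) :
    Integrable fun x => boPhase t x * f x :=
  hf.bdd_mul (c := 1) (continuous_boPhase t).aestronglyMeasurable
    (ae_of_all _ fun x => (norm_boPhase t x).le)

theorem memLp_boPhase_mul {f : ℝ → ℂ} (hf : MemLp f 2) (t : ℝ) :
    MemLp (fun x => boPhase t x * f x) 2 :=
  hf.of_le ((continuous_boPhase t).aestronglyMeasurable.mul hf.1) (ae_of_all _ fun x => by
    rw [norm_mul, norm_boPhase, one_mul])

namespace IsPrimitive

variable {a a' b b' : ℝ → ℂ}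

theorem boPhase_mul (ha : IsPrimitive a a') (t : ℝ) :
    IsPrimitive (fun x => boPhase t x * a x)
      (fun x => boPhase t x * (a' x - SignType.sign x * (2 * I * t * (x * a x)))) := by
  refine ((isPrimitive_boPhase t).mul ha).congr_deriv fun x => ?_
  ring

theorem boPhase_mul_sub_sign_mul (ha : IsPrimitive a a') (hb : IsPrimitive b b') (hb₀ : b 0 = 0)
    (t : ℝ) :
    IsPrimitive (fun x => boPhase t x * (a x - SignType.sign x * b x))
      (fun x => boPhase t x * ((a' x + 2 * I * t * (x * b x)) -
        SignType.sign x * (b' x + 2 * I * t * (x * a x)))) := by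
  refine ((ha.sub (hb.sign_mul hb₀)).boPhase_mul t).congr_deriv fun x => ?_
  linear_combination boPhase t x * 2 * I * t * b x * signCast_mul_signCast_mul_self x

end IsPrimitive

end Phase

/-! ### The third derivative of the multiplied data -/

section Expansion

theorem integrable_of_memLp_mul {f : ℝ → ℂ} (hf : MemLp f 2)
    (hxf : MemLp (fun x : ℝ => (x : ℂ) * f x) 2) : Integrable f := by
  have hne (x : ℝ) : 1 + x * I ≠ 0 := fun h => by simpa using congrArg Complex.re h
  have hinv_cont : Continuous fun x : ℝ => (1 + x * I)⁻¹ :=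
    Continuous.inv₀ (by fun_prop) hne
  have hinv : MemLp (fun x : ℝ => (1 + x * I)⁻¹) 2 := by
    refine (memLp_two_iff_integrable_sq_norm hinv_cont.aestronglyMeasurable).2
      (integrable_inv_one_add_sq.congr (ae_of_all _ fun x => ?_))
    simp only [norm_inv, inv_pow, Complex.sq_norm]
    rw [← Complex.ofReal_one, normSq_add_mul_I, one_pow]
  have hprod := hinv.integrable_mul (hf.add (hxf.const_mul I))
  refine hprod.congr (ae_of_all _ fun x => ?_)
  simp only [Pi.mul_apply, Pi.add_apply]
  field_simp [hne x]

theorem IsWeightedSobolevJet.integrable_pow_mul {G : ℕ → ℝ → ℂ} (hG : IsWeightedSobolevJet 4 G)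
    {j k : ℕ} (hjk : j + k ≤ 3) : Integrable fun x : ℝ => (x : ℂ) ^ j * G k x := by
  refine integrable_of_memLp_mul (hG.memLp_pow_mul (by omega)) ?_
  simpa only [pow_succ', mul_assoc] using hG.memLp_pow_mul (j := j + 1) (k := k) (by omega)

namespace IsPrimitive

variable {g g₁ g₂ g₃ : ℝ → ℂ}

theorem ofReal_mul (hg : IsPrimitive g g₁) :
    IsPrimitive (fun x : ℝ => (x : ℂ) * g x) (fun x => g x + x * g₁ x) := by
  simpa using (isPrimitive_ofReal_pow_succ 0).mul hg

theorem ofReal_pow_succ_mul (hg : IsPrimitive g g₁) (n : ℕ) :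
    IsPrimitive (fun x : ℝ => (x : ℂ) ^ (n + 1) * g x)
      (fun x => (n + 1) * (x ^ n * g x) + x ^ (n + 1) * g₁ x) := by
  simpa only [mul_assoc] using (isPrimitive_ofReal_pow_succ n).mul hg

theorem boPhase_mul_second (hg : IsPrimitive g g₁) (hg₁ : IsPrimitive g₁ g₂) (t : ℝ) :
    IsPrimitive (fun x => boPhase t x * (g₁ x - SignType.sign x * (2 * I * t * (x * g x))))
      (fun x => boPhase t x * ((g₂ x + (2 * I * t) ^ 2 * (x ^ 2 * g x)) -
        SignType.sign x * (2 * I * t * (2 * (x * g₁ x) + g x)))) := by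
  refine (hg₁.boPhase_mul_sub_sign_mul (hg.ofReal_mul.const_mul (2 * I * t)) (by simp)
    t).congr_deriv fun x => ?_
  ring

theorem boPhase_mul_third (hg : IsPrimitive g g₁) (hg₁ : IsPrimitive g₁ g₂)
    (hg₂ : IsPrimitive g₂ g₃) (hg_zero : g 0 = 0) (t : ℝ) :
    IsPrimitive (fun x => boPhase t x * ((g₂ x + (2 * I * t) ^ 2 * (x ^ 2 * g x)) -
        SignType.sign x * (2 * I * t * (2 * (x * g₁ x) + g x))))
      (fun x => boPhase t x * (g₃ x + 3 * (2 * I * t) ^ 2 * (x ^ 2 * g₁ x + x * g x)) -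
        SignType.sign x * (boPhase t x *
          (2 * I * t * (3 * g₁ x + 3 * (x * g₂ x) + (2 * I * t) ^ 2 * (x ^ 3 * g x))))) := by
  have heven := hg₂.add ((hg.ofReal_pow_succ_mul 1).const_mul ((2 * I * t) ^ 2))
  have hodd := ((hg₁.ofReal_mul.const_mul 2).add hg).const_mul (2 * I * t)
  refine (heven.boPhase_mul_sub_sign_mul hodd (by simp [hg_zero]) t).congr_deriv fun x => ?_
  push_cast
  ring

end IsPrimitive

/-- The part without sign function in the third derivative of `boPhase t * G 0`, divided by
`boPhase t`, where `G k` is the `k`-th derivative of `G 0`. -/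
noncomputable def boThirdRegular (t : ℝ) (G : ℕ → ℝ → ℂ) (x : ℝ) : ℂ :=
  G 3 x + 3 * (2 * I * t) ^ 2 * (x ^ 2 * G 1 x + x * G 0 x)

/-- Minus the coefficient of the sign function in the third derivative of `boPhase t * G 0`, divided
by `boPhase t`, where `G k` is the `k`-th derivative of `G 0`. -/
noncomputable def boThirdSign (t : ℝ) (G : ℕ → ℝ → ℂ) (x : ℝ) : ℂ :=
  2 * I * t * (3 * G 1 x + 3 * (x * G 2 x) + (2 * I * t) ^ 2 * (x ^ 3 * G 0 x))

namespace IsWeightedSobolevJet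

variable {G : ℕ → ℝ → ℂ}

theorem memLp_mul (hG : IsWeightedSobolevJet 4 G) {k : ℕ} (hk : k ≤ 3) :
    MemLp (fun x : ℝ => (x : ℂ) * G k x) 2 := by
  simpa only [pow_one] using hG.memLp_pow_mul (j := 1) (k := k) (by omega)

theorem integrable (hG : IsWeightedSobolevJet 4 G) {k : ℕ} (hk : k ≤ 3) : Integrable (G k) := by
  simpa only [pow_zero, one_mul] using hG.integrable_pow_mul (j := 0) (k := k) (by omega)

theorem integrable_mul (hG : IsWeightedSobolevJet 4 G) {k : ℕ} (hk : k ≤ 2) :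
    Integrable fun x : ℝ => (x : ℂ) * G k x := by
  simpa only [pow_one] using hG.integrable_pow_mul (j := 1) (k := k) (by omega)

theorem memLp_boThirdRegular (hG : IsWeightedSobolevJet 4 G) (t : ℝ) :
    MemLp (boThirdRegular t G) 2 :=
  (hG.memLp 3 (by omega)).add
    (((hG.memLp_pow_mul (by omega)).add (hG.memLp_mul (by omega))).const_mul _)

theorem memLp_mul_boThirdRegular (hG : IsWeightedSobolevJet 4 G) (t : ℝ) :
    MemLp (fun x : ℝ => (x : ℂ) * boThirdRegular t G x) 2 := by
  refine (memLp_congr_ae (ae_of_all _ fun x => ?_)).1 <|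
    (hG.memLp_mul (k := 3) le_rfl).add
      (((hG.memLp_pow_mul (j := 3) (k := 1) (by omega)).add
        (hG.memLp_pow_mul (j := 2) (k := 0) (by omega))).const_mul (3 * (2 * I * t) ^ 2))
  simp only [Pi.add_apply, boThirdRegular]
  ring

theorem exists_memLp_isPrimitive_boThirdRegular (hG : IsWeightedSobolevJet 4 G) (t : ℝ) :
    ∃ a', MemLp a' 2 ∧ IsPrimitive (boThirdRegular t G) a' := by
  have h₀ := hG.isPrimitive 0 (by omega)
  have h₁ := hG.isPrimitive 1 (by omega)
  have h₃ := hG.isPrimitive 3 (by omega)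
  refine ⟨_, ?_, h₃.add (((h₁.ofReal_pow_succ_mul 1).add h₀.ofReal_mul).const_mul _)⟩
  exact (hG.memLp 4 le_rfl).add (((((hG.memLp_pow_mul (by omega)).const_mul _).add
    (hG.memLp_pow_mul (by omega))).add
      ((hG.memLp 0 (by omega)).add (hG.memLp_mul (by omega)))).const_mul _)

theorem memLp_boThirdSign (hG : IsWeightedSobolevJet 4 G) (t : ℝ) :
    MemLp (boThirdSign t G) 2 :=
  (((((hG.memLp 1 (by omega)).const_mul 3).add ((hG.memLp_mul (by omega)).const_mul 3)).add
    ((hG.memLp_pow_mul (by omega)).const_mul _)).const_mul _)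

theorem memLp_mul_boThirdSign (hG : IsWeightedSobolevJet 4 G) (t : ℝ) :
    MemLp (fun x : ℝ => (x : ℂ) * boThirdSign t G x) 2 := by
  refine (memLp_congr_ae (ae_of_all _ fun x => ?_)).1 <|
    ((((hG.memLp_mul (k := 1) (by omega)).const_mul 3).add
      ((hG.memLp_pow_mul (j := 2) (k := 2) (by omega)).const_mul 3)).add
        ((hG.memLp_pow_mul (j := 4) (k := 0) (by omega)).const_mul ((2 * I * t) ^ 2))).const_mul
          (2 * I * t)
  simp only [Pi.add_apply, boThirdSign]
  ring

theorem exists_memLp_isPrimitive_boThirdSign (hG : IsWeightedSobolevJet 4 G) (t : ℝ) :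
    ∃ b', MemLp b' 2 ∧ IsPrimitive (boThirdSign t G) b' := by
  have h₀ := hG.isPrimitive 0 (by omega)
  have h₁ := hG.isPrimitive 1 (by omega)
  have h₂ := hG.isPrimitive 2 (by omega)
  refine ⟨_, ?_, (((h₁.const_mul 3).add (h₂.ofReal_mul.const_mul 3)).add
    ((h₀.ofReal_pow_succ_mul 2).const_mul _)).const_mul _⟩
  exact ((((hG.memLp 2 (by omega)).const_mul _).add
    (((hG.memLp 2 (by omega)).add (hG.memLp_mul (by omega))).const_mul _)).add
      ((((hG.memLp_pow_mul (by omega)).const_mul _).add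
        (hG.memLp_pow_mul (by omega))).const_mul _)).const_mul _

theorem memLp_pow_four_mul_fourier_boPhase_mul (hG : IsWeightedSobolevJet 4 G) (hG₀ : G 0 0 = 0)
    (t : ℝ) :
    MemLp (fun y : ℝ => (2 * π * I * y) ^ 4 * 𝓕 (fun x => boPhase t x * G 0 x) y +
      12 * I * t * G 1 0) 2 := by
  have h₀ := hG.isPrimitive 0 (by omega)
  have h₁ := hG.isPrimitive 1 (by omega)
  have h₂ := hG.isPrimitive 2 (by omega)
  obtain ⟨a', ha'_memLp, ha'⟩ := hG.exists_memLp_isPrimitive_boThirdRegular t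
  obtain ⟨b', hb'_memLp, hb'⟩ := hG.exists_memLp_isPrimitive_boThirdSign t
  have ha := hG.memLp_boThirdRegular t
  have hxa := hG.memLp_mul_boThirdRegular t
  have hb := hG.memLp_boThirdSign t
  have hxb := hG.memLp_mul_boThirdSign t
  have hF := hG.integrable (k := 0) (by omega)
  have hF₁ := (hG.integrable (k := 1) (by omega)).sub
    (integrable_sign_mul ((hG.integrable_mul (k := 0) (by omega)).const_mul (2 * I * t)))
  have hF₂ := ((hG.integrable (k := 2) (by omega)).add
    ((hG.integrable_pow_mul (j := 2) (k := 0) (by omega)).const_mul ((2 * I * t) ^ 2))).sub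
      (integrable_sign_mul ((((hG.integrable_mul (k := 1) (by omega)).const_mul 2).add
        (hG.integrable (k := 0) (by omega))).const_mul (2 * I * t)))
  have hjump := (h₀.boPhase_mul t).memLp_pow_four_mul_fourier_add
    (h₀.boPhase_mul_second h₁ t) (h₀.boPhase_mul_third h₁ h₂ hG₀ t)
    (ha'.boPhase_mul t) (hb'.boPhase_mul t) (integrable_boPhase_mul hF t)
    (integrable_boPhase_mul hF₁ t) (integrable_boPhase_mul hF₂ t)
    (integrable_boPhase_mul (integrable_of_memLp_mul ha hxa) t)
    (integrable_boPhase_mul (integrable_of_memLp_mul hb hxb) t)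
    (memLp_boPhase_mul ha t) (memLp_boPhase_mul hb t)
    (memLp_boPhase_mul (ha'_memLp.sub (memLp_sign_mul (hxa.const_mul _))) t)
    (memLp_boPhase_mul (hb'_memLp.sub (memLp_sign_mul (hxb.const_mul _))) t)
  refine (memLp_congr_ae (ae_of_all _ fun y => ?_)).1 hjump
  simp only [boPhase_zero, ofReal_zero]
  ring

end IsWeightedSobolevJet

end Expansion

/-! ### Weighted integrability of tails -/

section Tail

open Set

theorem integrableOn_compl_Icc_abs_rpow_iff {q : ℝ} :
    IntegrableOn (fun x : ℝ => |x| ^ q) (Icc (-1) 1)ᶜ ↔ q < -1 := by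
  have hunion : (Icc (-1 : ℝ) 1)ᶜ = Iio (-1) ∪ Ioi 1 := by
    rw [← Ici_inter_Iic, compl_inter, compl_Ici, compl_Iic]
  rw [hunion, integrableOn_union]
  have hIoi : IntegrableOn (fun x : ℝ => |x| ^ q) (Ioi 1) ↔ q < -1 := by
    rw [← integrableOn_Ioi_rpow_iff one_pos]
    exact integrableOn_congr_fun (fun x hx => by rw [abs_of_pos (one_pos.trans hx)])
      measurableSet_Ioi
  have hIio : IntegrableOn (fun x : ℝ => |x| ^ q) (Iio (-1)) ↔ q < -1 := by
    rw [← hIoi, ← (Measure.measurePreserving_neg volume).integrableOn_comp_preimage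
      (Homeomorph.neg ℝ).measurableEmbedding]
    simp [Function.comp_def]
  rw [hIio, hIoi, and_self]

theorem one_lt_abs_of_mem_compl_Icc {x : ℝ} (hx : x ∈ (Icc (-1) 1)ᶜ) : 1 < |x| :=
  not_le.1 fun hle => hx (abs_le.1 hle)

theorem norm_abs_rpow_mul_sq (q x : ℝ) (z : ℂ) :
    ‖((|x| ^ q : ℝ) : ℂ) * z‖ ^ 2 = |x| ^ (2 * q) * ‖z‖ ^ 2 := by
  rw [norm_mul, mul_pow, Complex.norm_real, norm_of_nonneg (by positivity),
    ← rpow_mul_natCast (abs_nonneg x), Nat.cast_ofNat, mul_comm q]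

theorem memLp_abs_rpow_mul_iff_of_memLp_add_const {f : ℝ → ℂ} {c : ℂ} {q : ℝ}
    (hf : MemLp (fun x => f x + c) 2) (hq : q ≤ 0) :
    MemLp (fun x => ((|x| ^ q : ℝ) : ℂ) * f x) 2 (volume.restrict (Icc (-1) 1)ᶜ) ↔
      c = 0 ∨ 2 * q < -1 := by
  set S : Set ℝ := (Icc (-1) 1)ᶜ
  let m : ℝ → ℂ := fun x => (|x| ^ q : ℝ)
  have hm : Measurable m := by fun_prop
  have hsum : MemLp (fun x => m x * (f x + c)) 2 (volume.restrict S) := by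
    refine (hf.restrict S).of_le (hm.aestronglyMeasurable.mul (hf.restrict S).1) ?_
    filter_upwards [ae_restrict_mem measurableSet_Icc.compl] with x hx
    rw [norm_mul]
    refine mul_le_of_le_one_left (norm_nonneg _) ?_
    rw [Complex.norm_real, norm_of_nonneg (by positivity)]
    exact rpow_le_one_of_one_le_of_nonpos (one_lt_abs_of_mem_compl_Icc hx).le hq
  have hconst : MemLp (fun x => m x * c) 2 (volume.restrict S) ↔ c = 0 ∨ 2 * q < -1 := by
    rcases eq_or_ne c 0 with rfl | hc
    · simp
    rw [memLp_two_iff_integrable_sq_norm (hm.mul_const c).aestronglyMeasurable]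
    simp only [m, norm_abs_rpow_mul_sq, hc, false_or]
    rw [integrable_mul_const_iff (by simpa using hc)]
    exact integrableOn_compl_Icc_abs_rpow_iff
  rw [← hconst]
  constructor
  · refine fun h => (memLp_congr_ae (ae_of_all _ fun x => ?_)).1 (hsum.sub h)
    simp only [m, Pi.sub_apply, mul_add, add_sub_cancel_left]
  · refine fun h => (memLp_congr_ae (ae_of_all _ fun x => ?_)).1 (hsum.sub h)
    simp only [m, Pi.sub_apply, mul_add, add_sub_cancel_right]

theorem integrableOn_compl_Icc_abs_rpow_mul_norm_sq_iff {v : ℝ → ℂ} {b c : ℂ} {n : ℕ} {p : ℝ}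
    (hv : Continuous v) (hb : b ≠ 0) (h : MemLp (fun x : ℝ => (b * x) ^ n * v x + c) 2)
    (hp : p ≤ 2 * n) :
    IntegrableOn (fun x => |x| ^ p * ‖v x‖ ^ 2) (Icc (-1) 1)ᶜ ↔ c = 0 ∨ p < 2 * n - 1 := by
  have norm_sq_eq {x : ℝ} (hx : x ∈ (Icc (-1) 1)ᶜ) :
      ‖((|x| ^ (p / 2 - n) : ℝ) : ℂ) * ((b * x) ^ n * v x)‖ ^ 2 =
        ‖b‖ ^ (2 * n) * (|x| ^ p * ‖v x‖ ^ 2) := by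
    have habs : |x| ^ (2 * (p / 2 - n)) * (|x| ^ n) ^ 2 = |x| ^ p := by
      rw [← pow_mul', ← rpow_add_natCast (by linarith [one_lt_abs_of_mem_compl_Icc hx])]
      congr 1
      push_cast
      ring
    rw [← habs, norm_abs_rpow_mul_sq, norm_mul, norm_pow, norm_mul, Complex.norm_real, norm_eq_abs]
    ring
  have hmemLp := memLp_abs_rpow_mul_iff_of_memLp_add_const (q := p / 2 - n) h (by linarith)
  have hexponent : 2 * (p / 2 - n) < -1 ↔ p < 2 * n - 1 := by
    constructor <;> intro <;> linarith
  have hmeas : AEStronglyMeasurable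
      (fun x : ℝ => ((|x| ^ (p / 2 - n) : ℝ) : ℂ) * ((b * x) ^ n * v x))
      (volume.restrict (Icc (-1) 1)ᶜ) :=
    (Measurable.aestronglyMeasurable (by fun_prop)).mul
      (Continuous.aestronglyMeasurable (by fun_prop))
  rw [← hexponent, ← hmemLp, memLp_two_iff_integrable_sq_norm hmeas, ← IntegrableOn,
    integrableOn_congr_fun (fun x hx => norm_sq_eq hx) measurableSet_Icc.compl,
    IntegrableOn, IntegrableOn, integrable_const_mul_iff (by simpa using pow_ne_zero _ hb)]

theorem integrable_abs_rpow_mul_norm_sq_iff {v : ℝ → ℂ} {b c : ℂ} {n : ℕ} {p : ℝ}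
    (hv : Continuous v) (hb : b ≠ 0) (h : MemLp (fun x : ℝ => (b * x) ^ n * v x + c) 2)
    (hp₀ : 0 ≤ p) (hp : p ≤ 2 * n) :
    Integrable (fun x => |x| ^ p * ‖v x‖ ^ 2) ↔ c = 0 ∨ p < 2 * n - 1 := by
  have hcont : Continuous fun x => |x| ^ p * ‖v x‖ ^ 2 :=
    (continuous_abs.rpow_const fun _ => Or.inr hp₀).mul (by fun_prop)
  rw [← integrableOn_compl_Icc_abs_rpow_mul_norm_sq_iff hv hb h hp, ← integrableOn_univ,
    ← union_compl_self (Icc (-1 : ℝ) 1), integrableOn_union]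
  exact and_iff_right hcont.integrableOn_Icc

end Tail

/-! ### Sharp decay of the linear flow -/

section Data

theorem exists_isWeightedSobolevJet_fourier {f : ℝ → ℂ} {n : ℕ} (hf : MemLp f 2)
    (hxf : MemLp (fun x : ℝ => (x : ℂ) ^ (n + 1) * f x) 2)
    (hxFf : MemLp (fun x : ℝ => (x : ℂ) ^ (n + 1) * 𝓕 f x) 2) :
    ∃ G, IsWeightedSobolevJet (n + 1) G ∧
      ∀ k ≤ n, G k = 𝓕 fun x : ℝ => (-(2 * π * I * x)) ^ k * f x := by
  let V : ℕ → ℝ → ℂ := fun k x => (-(2 * π * I * x)) ^ k * f x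
  have hV_zero : V 0 = f := by simp only [V, pow_zero, one_mul]
  have hV_succ (k : ℕ) : V (k + 1) = fun x : ℝ => -(2 * π * I * x) * V k x := by
    simp only [V, pow_succ', mul_assoc]
  have hV_memLp {k : ℕ} (hk : k ≤ n + 1) : MemLp (V k) 2 := by
    refine (memLp_congr_ae (ae_of_all _ fun x => ?_)).1
      ((memLp_pow_mul_of_le hf hxf hk).const_mul ((-(2 * π * I)) ^ k))
    simp only [V]
    ring
  have hV_integrable {k : ℕ} (hk : k ≤ n) : Integrable (V k) := by
    refine integrable_of_memLp_mul (hV_memLp (by omega)) ?_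
    refine (memLp_congr_ae (ae_of_all _ fun x => ?_)).1
      ((hV_memLp (Nat.succ_le_succ hk)).const_mul (-(2 * π * I))⁻¹)
    rw [hV_succ]
    field_simp [two_pi_I_ne_zero]
  obtain ⟨g, hg_memLp, hg⟩ := exists_memLp_isPrimitive_fourier (hV_integrable le_rfl)
    (hV_succ n ▸ hV_memLp le_rfl)
  refine ⟨fun k => if k ≤ n then 𝓕 (V k) else g, ⟨fun k hk => ?_, fun k hk => ?_, ?_⟩,
    fun k hk => if_pos hk⟩
  · rcases (Nat.lt_succ_iff.1 hk).lt_or_eq with hk' | rfl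
    · simp only [hk'.le, Nat.succ_le_of_lt hk', if_true]
      rw [hV_succ]
      exact .fourier_of_integrable (hV_integrable hk'.le) (hV_succ k ▸ hV_integrable hk')
    · simpa using hg
  · split_ifs with hk'
    · exact memLp_fourier (hV_integrable hk') (hV_memLp hk)
    · exact hg_memLp
  · simpa [hV_zero] using hxFf

namespace InZ

variable {s r : ℝ} {f : ℝ → ℝ} {n : ℕ}

theorem memLp_two (hf : InZ s r f) : MemLp (fun x => (f x : ℂ)) 2 :=
  ⟨continuous_ofReal.comp_aestronglyMeasurable hf.1, (ENNReal.add_lt_top.1 hf.2).2⟩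

theorem memLp_pow_mul (hf : InZ s r f) (hn : n ≤ r) :
    MemLp (fun x : ℝ => (x : ℂ) ^ n * f x) 2 := by
  have hmeas := continuous_ofReal.comp_aestronglyMeasurable hf.1
  have hweight : MemLp (fun x : ℝ => ((|x| ^ r : ℝ) : ℂ) * f x) 2 :=
    ⟨(Measurable.aestronglyMeasurable (by fun_prop)).mul hmeas,
      (ENNReal.add_lt_top.1 (ENNReal.add_lt_top.1 hf.2).1).2⟩
  refine (hweight.norm.add hf.memLp_two.norm).mono
    ((Continuous.aestronglyMeasurable (by fun_prop)).mul hmeas) (ae_of_all _ fun x => ?_)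
  have hpow : |x| ^ n ≤ |x| ^ r + 1 := by
    rcases le_total |x| 1 with hx | hx
    · exact (pow_le_one₀ (abs_nonneg x) hx).trans (le_add_of_nonneg_left (by positivity))
    · rw [← rpow_natCast]
      exact (rpow_le_rpow_of_exponent_le hx hn).trans (le_add_of_nonneg_right zero_le_one)
  simp only [Pi.add_apply, norm_mul, norm_pow, Complex.norm_real, norm_eq_abs]
  rw [← add_one_mul, abs_mul, abs_abs, abs_of_nonneg (by positivity : 0 ≤ |x| ^ r),
    abs_of_nonneg (by positivity : 0 ≤ |x| ^ r + 1)]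
  gcongr

theorem memLp_pow_mul_fourier (hf : InZ s r f) (hf_int : Integrable fun x => (f x : ℂ))
    (hn : n ≤ s) : MemLp (fun x : ℝ => (x : ℂ) ^ n * 𝓕 (fun x => (f x : ℂ)) x) 2 := by
  have hcont := continuous_fourier hf_int
  refine ⟨Continuous.aestronglyMeasurable (by fun_prop), lt_of_le_of_lt (eLpNorm_mono fun x => ?_)
    (ENNReal.add_lt_top.1 (ENNReal.add_lt_top.1 hf.2).1).1⟩
  rw [norm_mul, norm_mul, norm_pow, Complex.norm_real, Complex.norm_real,
    norm_of_nonneg (by positivity : (0 : ℝ) ≤ (1 + x ^ 2) ^ (s / 2)), norm_eq_abs]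
  gcongr
  calc |x| ^ n = (x ^ 2) ^ ((n : ℝ) / 2) := by
        rw [← sq_abs, ← rpow_natCast_mul (abs_nonneg x), ← rpow_natCast]
        congr 1
        push_cast
        ring
    _ ≤ (1 + x ^ 2) ^ ((n : ℝ) / 2) := by gcongr; linarith
    _ ≤ (1 + x ^ 2) ^ (s / 2) := by gcongr; nlinarith [sq_nonneg x]

end InZ

theorem InZ.exists_isWeightedSobolevJet {s r : ℝ} {f : ℝ → ℝ} {n : ℕ} (hf : InZ s r f)
    (hs : n + 1 ≤ s) (hr : n + 1 ≤ r) :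
    ∃ G, IsWeightedSobolevJet (n + 1) G ∧
      ∀ k ≤ n, G k = 𝓕 fun x : ℝ => (-(2 * π * I * x)) ^ k * (f x : ℂ) := by
  have hxf := hf.memLp_pow_mul (n := n + 1) (by exact_mod_cast hr)
  have hf_int := integrable_of_memLp_mul hf.memLp_two <| by
    simpa only [pow_one] using memLp_pow_mul_of_le hf.memLp_two hxf (Nat.le_add_left 1 n)
  exact exists_isWeightedSobolevJet_fourier hf.memLp_two hxf
    (hf.memLp_pow_mul_fourier hf_int (by exact_mod_cast hs))

end Data

section LinearBenjaminOno

theorem fourier_neg_two_pi_I_mul_zero (f : ℝ → ℝ) :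
    𝓕 (fun x : ℝ => -(2 * π * I * x) * (f x : ℂ)) 0 = -(2 * π * I) * (∫ x, x * f x : ℝ) := by
  rw [← integral_complex_ofReal, ← integral_const_mul, fourier_eq_integral_mul]
  refine integral_congr_ae (ae_of_all _ fun x => ?_)
  simp only [mul_zero, ofReal_zero, zero_mul, Complex.exp_zero, one_mul, ofReal_mul]
  ring

theorem linBO_apply (t : ℝ) (u₀ : ℝ → ℝ) (x : ℝ) :
    linBO t u₀ x = 𝓕 (fun ξ => boPhase t ξ * 𝓕 (fun x => (u₀ x : ℂ)) ξ) (-x) :=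
  fourierInv_eq_fourier_neg _ x

theorem continuous_linBO {u₀ : ℝ → ℝ} (hu₀ : Integrable (𝓕 fun x => (u₀ x : ℂ))) (t : ℝ) :
    Continuous (linBO t u₀) := by
  rw [funext (linBO_apply t u₀)]
  exact (continuous_fourier (integrable_boPhase_mul hu₀ t)).comp continuous_neg

theorem continuous_linBO_and_memLp_pow_four_mul_linBO_add {s r : ℝ} (hs : 4 ≤ s) (hr : 4 ≤ r)
    {u₀ : ℝ → ℝ} (hu₀ : InZdot s r u₀) (t : ℝ) :
    Continuous (linBO t u₀) ∧
      MemLp (fun x : ℝ => (-(2 * π * I) * x) ^ 4 * linBO t u₀ x +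
        24 * π * t * (∫ y, y * u₀ y : ℝ)) 2 := by
  obtain ⟨G, hG, hG_eq⟩ := hu₀.1.exists_isWeightedSobolevJet (n := 3)
    (by norm_num; exact hs) (by norm_num; exact hr)
  have hG₀ : G 0 = 𝓕 fun x => (u₀ x : ℂ) := by
    simpa only [pow_zero, one_mul] using hG_eq 0 (by omega)
  have hG₁ : G 1 0 = -(2 * π * I) * (∫ x, x * u₀ x : ℝ) := by
    rw [hG_eq 1 (by omega), ← fourier_neg_two_pi_I_mul_zero]
    simp only [pow_one]
  refine ⟨continuous_linBO (hG₀ ▸ hG.integrable (by omega)) t, ?_⟩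
  have hjump := (hG.memLp_pow_four_mul_fourier_boPhase_mul (hG₀ ▸ hu₀.2) t).comp_measurePreserving
    (Measure.measurePreserving_neg volume)
  refine (memLp_congr_ae (ae_of_all _ fun x => ?_)).1 hjump
  simp only [Function.comp_apply, hG₁, linBO_apply, hG₀, ofReal_neg]
  linear_combination (-24 * π * t * (∫ x, x * u₀ x : ℝ)) * I_sq

theorem linear_bo_sharp_weighted_decay_general {s r : ℝ} (hs : 4 ≤ s) (hr : 4 ≤ r) {u₀ : ℝ → ℝ}
    (hu₀ : InZdot s r u₀) (t : ℝ) {p : ℝ} (hp₀ : 0 ≤ p) (hp : p ≤ 8) :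
    Integrable (fun x => |x| ^ p * ‖linBO t u₀ x‖ ^ 2) ↔
      p < 7 ∨ t = 0 ∨ ∫ x, x * u₀ x = 0 := by
  obtain ⟨hcont, hmemLp⟩ := continuous_linBO_and_memLp_pow_four_mul_linBO_add hs hr hu₀ t
  rw [integrable_abs_rpow_mul_norm_sq_iff hcont (neg_ne_zero.2 two_pi_I_ne_zero) hmemLp hp₀
    (by norm_num; exact hp)]
  have hexponent : p < 2 * (4 : ℕ) - 1 ↔ p < 7 := by norm_num
  simp only [hexponent, mul_eq_zero, ofReal_eq_zero, OfNat.ofNat_ne_zero, pi_ne_zero, false_or,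
    or_comm]

end LinearBenjaminOno

/-- If `u₀ ∈ Ż_{5,4}` has nonzero first momentum, then for every
`t ≠ 0` the linear solution `W(t)u₀` belongs to `L²(|x|^{7-ε} dx)` for every
`ε ∈ (0,7]` but not to `L²(|x|⁷ dx)`. -/
theorem linear_bo_sharp_weighted_decay (u₀ : ℝ → ℝ)
    (hu₀ : InZdot 5 4 u₀)
    (hmom : (∫ x : ℝ, x * u₀ x) ≠ 0) :
    ∀ t : ℝ, t ≠ 0 →
      (∀ ε : ℝ, ε ∈ Set.Ioc (0 : ℝ) 7 →
          Integrable (fun x : ℝ => |x| ^ (7 - ε) * ‖linBO t u₀ x‖ ^ 2) volume) ∧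
        ¬ Integrable (fun x : ℝ => |x| ^ (7 : ℝ) * ‖linBO t u₀ x‖ ^ 2) volume := by
  intro t ht
  have hiff := @linear_bo_sharp_weighted_decay_general 5 4 (by norm_num) le_rfl u₀ hu₀ t
  exact ⟨fun ε hε => (hiff (by linarith [hε.2]) (by linarith [hε.1])).2 (.inl (by linarith [hε.1])),
    mt (hiff (by norm_num) (by norm_num)).1 (by simp [ht, hmom])⟩
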